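/- arXiv:2205.06375 — 2 statements merged into one kernel-verified Lean document; each statement's English description precedes it below -/
import Mathlib

section
/- For every area sequence w, dinv(ψ(w)) = area(w). -/
/-- The `i`-th letter of the word `w` (`1`-indexed, as in the paper);
defaults to `0` out of range. -/
def get1 (w : List ℕ) (i : ℕ) : ℕ := w.getD (i - 1) 0

/-- `w` is the area sequence of a Dyck path: the first letter is `0` and each
letter exceeds the previous one by at most one. -/
def IsAreaSeq (w : List ℕ) : Prop :=
  (w ≠ [] → get1 w 1 = 0) ∧ ∀ i, 1 ≤ i → i < w.length → get1 w (i + 1) ≤ get1 w i + 1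

/-- Insertion at position `i` (for `0 ≤ i ≤ n`): `ins w 0` prepends a `0`, and
for `1 ≤ i ≤ n`, `ins w i` inserts the letter `w_i + 1` just after position `i`. -/
def ins (w : List ℕ) (i : ℕ) : List ℕ :=
  w.take i ++ (if i = 0 then 0 else get1 w i + 1) :: w.drop i

/-- The area statistic: the sum of the letters. -/
def area (w : List ℕ) : ℕ := w.sum

/-- The dinv statistic: `dinv w = Σ_i d_i` where `d_i` is the number of `j > i`
with `w_j = w_i` or `w_j = w_i - 1`. -/
def dinv (w : List ℕ) : ℕ :=
  ∑ i ∈ Finset.Icc 1 w.length,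
    ((Finset.Ioc i w.length).filter
      (fun j => get1 w j = get1 w i ∨ get1 w j + 1 = get1 w i)).card

/-- The maximal value of a word (`0` for the empty word). -/
def maxVal (w : List ℕ) : ℕ := w.foldr max 0

/-- Positions of the letters of maximal value `m`. -/
def Maxb (w : List ℕ) : Finset ℕ :=
  (Finset.Icc 1 w.length).filter (fun i => get1 w i = maxVal w)

/-- Positions `i` with `w_i = m - 1` such that all letters after position `i`
are `< m`. -/
def Maxa (w : List ℕ) : Finset ℕ :=
  (Finset.Icc 1 w.length).filter (fun i =>
    get1 w i + 1 = maxVal w ∧ ∀ j ∈ Finset.Ioc i w.length, get1 w j < maxVal w)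

/-- The position of the leftmost letter equal to the maximal value `m` in the
rightmost block of consecutive letters equal to `m`. -/
def i0 (w : List ℕ) : ℕ :=
  ((Finset.Icc 1 w.length).filter (fun i =>
    get1 w i = maxVal w ∧ (i = 1 ∨ get1 w (i - 1) ≠ maxVal w))).sup id

/-- The admissible insertion positions of `w`, listed in admissible order:
the elements of `Maxb w` in decreasing order, then the elements of `Maxa w`
in decreasing order, then `i0 w - 1`.  The empty word has the single
admissible insertion position `0`. -/
def admissible (w : List ℕ) : List ℕ :=
  if w = [] then [0]
  else ((Maxb w).sort (· ≤ ·)).reverse ++ ((Maxa w).sort (· ≤ ·)).reverse ++ [i0 w - 1]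

/-- Auxiliary version of the map `ψ`, reading the reversed word. -/
def psiRev : List ℕ → List ℕ
  | [] => []
  | a :: u => ins (psiRev u) ((admissible (psiRev u)).getD a 0)

/-- The map `ψ`: `ψ(ε) = ε` and `ψ(u a) = ins_{c_a}(ψ(u))` where
`c_0, c_1, …, c_k` are the admissible insertion positions of `ψ(u)` in
admissible order. -/
def psi (w : List ℕ) : List ℕ := psiRev w.reverse

/-- The bounce sequence: `b_1 = 0`, and `b_i = b_{i-1} + 1` if
`b_{i-1} + 1 ≤ w_i`, otherwise `b_i = 0`. -/
def bseq (w : List ℕ) : ℕ → ℕ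
  | 0 => 0
  | 1 => 0
  | (i + 2) => if bseq w (i + 1) + 1 ≤ get1 w (i + 2) then bseq w (i + 1) + 1 else 0

/-- The bounces of `w`: positions `1 < i ≤ n` with `b_i = 0`. -/
def bounces (w : List ℕ) : Finset ℕ :=
  (Finset.Icc 2 w.length).filter (fun i => bseq w i = 0)

/-- The bounce statistic: the sum of the reversed positions `n - i + 1` of the
bounces of `w`. -/
def bounce (w : List ℕ) : ℕ := ∑ i ∈ bounces w, (w.length - i + 1)

/-!
Inserting a letter `x` into `L R`, to form `L x R`, raises dinv by the number of dinv pairs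
containing it. If `x` becomes the last maximal letter, these pairs join it with the copies of `x`
in `L` and the letters `x - 1` in `R`, that is, with all other elements of `Maxb` and with all
elements of `Maxa` of the new word; so the new word has exactly two more admissible positions than
dinv has gained. Every admissible insertion is of this kind, the one at `i₀ - 1` because lengthening
a block of maximal letters at its start or at its end gives the same word, and the admissible order
is chosen so that the insertion at `c_a` gains exactly `a`. Hence reading a letter `a` of an area
sequence adds `a` to dinv and leaves `a + 2` admissible positions, just enough for the next letter,
which is at most `a + 1`.
-/

/-! ### Words and area sequences -/

theorem exists_eq_append_replicate_append {α : Type*} {w : List α} {m : α}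
    (hm : m ∈ w) :
    ∃ B k R, w = B ++ List.replicate (k + 1) m ++ R ∧ m ∉ R ∧ B.getLast? ≠ some m := by
  classical
  obtain ⟨R, A, hw, hR⟩ := List.eq_append_cons_of_mem (List.mem_reverse.2 hm)
  have hrep : A.takeWhile (· = m) = List.replicate (A.takeWhile (· = m)).length m :=
    List.eq_replicate_iff.2 ⟨rfl, fun y hy => by simpa using List.mem_takeWhile_imp hy⟩
  refine ⟨(A.dropWhile (· = m)).reverse, (A.takeWhile (· = m)).length, R.reverse, ?_, by simpa, ?_⟩
  · rw [← List.reverse_inj, hw, List.reverse_append, List.reverse_append, List.reverse_reverse,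
      List.reverse_reverse, List.reverse_replicate, List.replicate_succ, ← hrep, List.cons_append,
      List.takeWhile_append_dropWhile]
  · rw [List.getLast?_reverse]
    intro h
    simpa [h] using List.head?_dropWhile_not (· = m) A

theorem countP_getElem_lt_of_pairwise_gt {α : Type*} [LinearOrder α] {l : List α}
    (hl : l.Pairwise (· > ·)) {a : ℕ} (ha : a < l.length) : l.countP (l[a] < ·) = a := by
  induction l generalizing a with
  | nil => simp at ha
  | cons b l ih =>
    obtain ⟨hb, hl⟩ := List.pairwise_cons.1 hl
    obtain _ | a := a
    · simpa using fun x hx => (hb x hx).le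
    · have ha : a < l.length := by simpa using ha
      rw [List.getElem_cons_succ, List.countP_cons_of_pos (by simpa using hb _ (l.getElem_mem ha)),
        ih hl ha]

theorem card_filter_sort_reverse_getElem_lt {α : Type*} [LinearOrder α] (S : Finset α) {a : ℕ}
    (ha : a < (S.sort (· ≤ ·)).reverse.length) :
    (S.filter ((S.sort (· ≤ ·)).reverse[a] < ·)).card = a := by
  generalize hc : (S.sort (· ≤ ·)).reverse[a] = c
  have hS : S.val = ((S.sort (· ≤ ·)).reverse : Multiset α) := by simp
  rw [Finset.card_def, Finset.filter_val, ← Multiset.countP_eq_card_filter, hS,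
    Multiset.coe_countP, ← hc]
  refine countP_getElem_lt_of_pairwise_gt ?_ ha
  exact List.pairwise_reverse.2 (Finset.sortedLT_sort S).pairwise

theorem get1_add_one {w : List ℕ} {i : ℕ} (hi : i < w.length) : get1 w (i + 1) = w[i] :=
  List.getD_eq_getElem _ _ hi

theorem get1_append_length_add_one (C : List ℕ) (y : ℕ) (R : List ℕ) :
    get1 (C ++ y :: R) (C.length + 1) = y := by
  simp [get1]

theorem map_get1_Ioc (w : List ℕ) (c : ℕ) :
    (Finset.Ioc c w.length).val.map (get1 w) = (w.drop c : Multiset ℕ) := by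
  have h : (List.range' (c + 1) (w.length - c)).map (get1 w) = w.drop c :=
    List.ext_getElem (by simp) fun i _ hi => by
      rw [List.length_drop] at hi
      simp [add_right_comm c 1 i, get1_add_one (show c + i < w.length by omega)]
  exact congrArg _ h

theorem forall_mem_drop_iff {w : List ℕ} {c : ℕ} {P : ℕ → Prop} :
    (∀ x ∈ w.drop c, P x) ↔ ∀ j ∈ Finset.Ioc c w.length, P (get1 w j) := by
  simp only [← Multiset.mem_coe, ← map_get1_Ioc, Multiset.mem_map, Finset.mem_val,
    forall_exists_index, and_imp, forall_apply_eq_imp_iff₂]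

theorem card_filter_get1_Ioc (w : List ℕ) (c : ℕ) (P : ℕ → Prop) [DecidablePred P] :
    ((Finset.Ioc c w.length).filter fun j => P (get1 w j)).card = (w.drop c).countP (P ·) := by
  rw [← Multiset.coe_countP, ← map_get1_Ioc, Multiset.countP_map]
  rfl

theorem ins_append_cons (C : List ℕ) (y : ℕ) (R : List ℕ) :
    ins (C ++ y :: R) (C.length + 1) = C ++ y :: (y + 1) :: R := by
  simp [ins, get1_append_length_add_one, List.take_append]

theorem isAreaSeq_iff {w : List ℕ} :
    IsAreaSeq w ↔ (∀ a ∈ w.head?, a = 0) ∧ w.IsChain (fun a b => b ≤ a + 1) := by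
  refine and_congr ?_ ?_
  · cases w <;> simp [get1]
  · rw [List.isChain_iff_getElem]
    constructor
    · intro h i hi
      simpa [get1_add_one hi, get1_add_one (Nat.lt_of_succ_lt hi)] using h (i + 1) (by omega) hi
    · rintro h (_ | i) hi hiw
      · omega
      · simpa [get1_add_one hiw, get1_add_one (Nat.lt_of_succ_lt hiw)] using h i hiw

theorem IsAreaSeq.of_append {u v : List ℕ} (h : IsAreaSeq (u ++ v)) : IsAreaSeq u := by
  rw [isAreaSeq_iff, List.isChain_append] at h
  refine isAreaSeq_iff.2 ⟨fun a ha => h.1 a ?_, h.2.1⟩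
  simp_all [List.head?_append]

theorem IsAreaSeq.le_add_one {u v : List ℕ} {b a : ℕ} (h : IsAreaSeq (u ++ b :: a :: v)) :
    a ≤ b + 1 := by
  rw [isAreaSeq_iff, List.isChain_append, List.isChain_cons_cons] at h
  exact h.2.2.1.1

theorem isAreaSeq_ins {w : List ℕ} (hw : IsAreaSeq w) {c : ℕ} (hc : c ≤ w.length) :
    IsAreaSeq (ins w c) := by
  obtain _ | c := c
  · rw [isAreaSeq_iff] at hw ⊢
    simpa [ins, List.isChain_cons, hw.2] using fun a ha => (hw.1 a ha).le.trans zero_le_one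
  obtain ⟨C, y, R, rfl, rfl⟩ : ∃ C y R, w = C ++ y :: R ∧ c = C.length :=
    ⟨w.take c, w[c], w.drop (c + 1), by simp, (List.length_take_of_le (by omega)).symm⟩
  rw [ins_append_cons, isAreaSeq_iff]
  rw [isAreaSeq_iff] at hw
  simp only [List.isChain_append, List.isChain_cons] at hw ⊢
  obtain ⟨hhead, hC, ⟨hyR, hR⟩, hCy⟩ := hw
  refine ⟨by simpa using hhead, hC, ⟨by simp, fun z hz => ?_, hR⟩, hCy⟩
  exact (hyR z hz).trans (Nat.le_succ _)

theorem IsAreaSeq.ins_append_cons_length {B R : List ℕ} {m : ℕ} (h : IsAreaSeq (B ++ m :: R))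
    (hle : ∀ y ∈ B, y ≤ m) (hB : B.getLast? ≠ some m) :
    ins (B ++ m :: R) B.length = B ++ m :: m :: R := by
  obtain rfl | ⟨C, y, rfl⟩ := List.eq_nil_or_concat' B
  · have hm : m = 0 := by simpa [get1] using h.1
    simp [ins, hm]
  · rw [List.append_assoc] at h ⊢
    have hym : y + 1 = m := by
      have := h.le_add_one
      have := hle y (by simp)
      have : y ≠ m := by simpa using hB
      omega
    simp [ins_append_cons, hym]

/-! ### The dinv statistic -/

theorem dinv_eq_sum_countP (w : List ℕ) :
    dinv w = ∑ i ∈ Finset.range w.length,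
      (w.drop (i + 1)).countP (fun b => b = get1 w (i + 1) ∨ b + 1 = get1 w (i + 1)) := by
  rw [dinv, ← Finset.Ico_add_one_right_eq_Icc, Finset.range_eq_Ico,
    Finset.sum_Ico_add' (fun i => (w.drop i).countP (fun b => b = get1 w i ∨ b + 1 = get1 w i))]
  exact Finset.sum_congr rfl fun i _ =>
    card_filter_get1_Ioc w i fun b => b = get1 w i ∨ b + 1 = get1 w i

theorem dinv_cons (a : ℕ) (w : List ℕ) :
    dinv (a :: w) = w.countP (fun b => b = a ∨ b + 1 = a) + dinv w := by
  rw [dinv_eq_sum_countP, dinv_eq_sum_countP, List.length_cons, Finset.sum_range_succ', add_comm]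
  rfl

theorem dinv_append_cons (L R : List ℕ) (x : ℕ) :
    dinv (L ++ x :: R) = dinv (L ++ R) +
      (L.countP (fun b => b = x ∨ b = x + 1) + R.countP (fun b => b = x ∨ b + 1 = x)) := by
  induction L with
  | nil => simp [dinv_cons, add_comm]
  | cons a L ih =>
    have hax : (x = a ∨ x + 1 = a) ↔ (a = x ∨ a = x + 1) := by omega
    simp only [List.cons_append, dinv_cons, ih, List.countP_append, List.countP_cons, hax]
    omega

/-! ### Maximal letters and admissible positions -/

theorem le_maxVal {w : List ℕ} {x : ℕ} (hx : x ∈ w) : x ≤ maxVal w :=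
  List.le_max_of_le hx le_rfl

theorem maxVal_eq_of_mem {w : List ℕ} {m : ℕ} (hm : m ∈ w) (hle : ∀ x ∈ w, x ≤ m) :
    maxVal w = m :=
  (List.max_le_of_forall_le w m hle).antisymm (le_maxVal hm)

theorem maxVal_mem {w : List ℕ} (hw : w ≠ []) : maxVal w ∈ w := by
  induction w with
  | nil => contradiction
  | cons a w ih =>
    obtain rfl | hw := eq_or_ne w []
    · simp [maxVal]
    · rcases max_choice a (maxVal w) with h | h
      · exact List.mem_cons.2 (.inl h)
      · exact List.mem_cons_of_mem a (by simpa [maxVal] using h ▸ ih hw)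

theorem length_admissible {w : List ℕ} (hw : w ≠ []) :
    (admissible w).length = (Maxb w).card + (Maxa w).card + 1 := by
  simp [admissible, hw, add_assoc]

theorem le_length_of_mem_admissible {w : List ℕ} {c : ℕ} (hc : c ∈ admissible w) :
    c ≤ w.length := by
  have hi0 : i0 w ≤ w.length := Finset.sup_le fun i hi => by simp_all
  rw [admissible] at hc
  split_ifs at hc
  · simp_all
  · simp only [Maxb, Maxa, List.mem_append, List.mem_reverse, Finset.mem_sort, Finset.mem_filter,
      Finset.mem_Icc, List.mem_singleton] at hc
    omega

theorem admissible_getD_le_length (w : List ℕ) (a : ℕ) :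
    (admissible w).getD a 0 ≤ w.length := by
  obtain ha | ha := lt_or_ge a (admissible w).length
  · rw [List.getD_eq_getElem _ _ ha]
    exact le_length_of_mem_admissible (List.getElem_mem ha)
  · rw [List.getD_eq_default _ _ ha]
    exact Nat.zero_le _

theorem card_filter_lt_Maxb (w : List ℕ) (c : ℕ) :
    ((Maxb w).filter (c < ·)).card = (w.drop c).count (maxVal w) := by
  have h : (Maxb w).filter (c < ·) =
      (Finset.Ioc c w.length).filter fun j => get1 w j = maxVal w := by
    ext j
    simp only [Maxb, Finset.mem_filter, Finset.mem_Icc, Finset.mem_Ioc]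
    omega
  rw [h, card_filter_get1_Ioc w c (· = maxVal w)]
  rfl

theorem card_Maxb (w : List ℕ) : (Maxb w).card = w.count (maxVal w) := by
  have hpos : ∀ i ∈ Maxb w, 0 < i := fun i hi => by
    simp only [Maxb, Finset.mem_filter, Finset.mem_Icc] at hi
    omega
  rw [← Finset.filter_true_of_mem hpos, card_filter_lt_Maxb, List.drop_zero]

theorem card_filter_lt_Maxa {w : List ℕ} {c : ℕ} (hc : ∀ x ∈ w.drop c, x < maxVal w) :
    ((Maxa w).filter (c < ·)).card = (w.drop c).countP (· + 1 = maxVal w) := by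
  rw [← card_filter_get1_Ioc w c (· + 1 = maxVal w)]
  congr 1
  ext j
  simp only [Maxa, Finset.mem_filter, Finset.mem_Icc, Finset.mem_Ioc]
  refine ⟨fun h => ⟨⟨h.2, h.1.1.2⟩, h.1.2.1⟩, fun h => ⟨⟨by omega, h.2, fun i hi => ?_⟩, h.1.1⟩⟩
  exact forall_mem_drop_iff.1 hc i (Finset.mem_Ioc.2 ⟨h.1.1.trans hi.1, hi.2⟩)

section LastMaximum

variable {L R : List ℕ} {x : ℕ} (hL : ∀ y ∈ L, y ≤ x) (hR : ∀ y ∈ R, y < x)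

include hL hR

theorem maxVal_append_cons : maxVal (L ++ x :: R) = x :=
  maxVal_eq_of_mem (by simp) fun y hy => by
    rcases List.mem_append.1 hy with hy | hy
    · exact hL y hy
    · rcases List.mem_cons.1 hy with rfl | hy
      · rfl
      · exact (hR y hy).le

theorem card_Maxa_append_cons : (Maxa (L ++ x :: R)).card = R.countP (· + 1 = x) := by
  have hmax := maxVal_append_cons hL hR
  have hlt : ∀ i ∈ Maxa (L ++ x :: R), L.length + 1 < i := fun i hi => by
    simp only [Maxa, hmax, Finset.mem_filter, Finset.mem_Ioc] at hi
    by_contra! hile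
    obtain rfl | hile := hile.eq_or_lt
    · simp [get1_append_length_add_one] at hi
    · simpa [get1_append_length_add_one] using hi.2.2 (L.length + 1) ⟨hile, by simp⟩
  have hdrop : (L ++ x :: R).drop (L.length + 1) = R := by simp
  rw [← Finset.filter_true_of_mem hlt, card_filter_lt_Maxa (by rwa [hdrop, hmax]), hdrop, hmax]

theorem length_admissible_append_cons :
    (admissible (L ++ x :: R)).length = L.count x + R.countP (· + 1 = x) + 2 := by
  have hxR : R.count x = 0 := List.count_eq_zero.2 fun hx => (hR x hx).false
  rw [length_admissible (by simp), card_Maxa_append_cons hL hR, card_Maxb,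
    maxVal_append_cons hL hR, List.count_append, List.count_cons_self, hxR]
  omega

theorem dinv_append_cons_of_le_of_lt :
    dinv (L ++ x :: R) = dinv (L ++ R) + (L.count x + R.countP (· + 1 = x)) := by
  rw [dinv_append_cons]
  congr 2
  · refine List.countP_congr fun y hy => ?_
    have := hL y hy
    simp only [decide_eq_true_eq, beq_iff_eq]
    omega
  · refine List.countP_congr fun y hy => ?_
    have := hR y hy
    simp only [decide_eq_true_eq]
    omega

end LastMaximum

section LastBlock

variable {B R : List ℕ} {m k : ℕ} (hB : B.getLast? ≠ some m)
  (hm : maxVal (B ++ List.replicate (k + 1) m ++ R) = m) (hR : m ∉ R)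

include hB hm hR

theorem i0_append_replicate_append :
    i0 (B ++ List.replicate (k + 1) m ++ R) = B.length + 1 := by
  have hblock : ∀ j, B.length < j → j ≤ B.length + (k + 1) →
      get1 (B ++ List.replicate (k + 1) m ++ R) j = m := fun j hj hjk => by
    obtain ⟨t, rfl⟩ := Nat.exists_eq_add_of_lt hj
    have ht : B.length + t < (B ++ List.replicate (k + 1) m).length := by
      rw [List.length_append, List.length_replicate]
      omega
    rw [get1_add_one (ht.trans_le (by simp)), List.getElem_append_left ht,
      List.getElem_append_right (by omega), List.getElem_replicate]
  have hafter : ∀ j ∈ Finset.Ioc (B.length + (k + 1)) (B ++ List.replicate (k + 1) m ++ R).length,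
      get1 (B ++ List.replicate (k + 1) m ++ R) j ≠ m := by
    rw [← forall_mem_drop_iff (P := (· ≠ m)), List.drop_left' (by simp)]
    exact fun x hx hxm => hR (hxm ▸ hx)
  rw [i0, hm]
  apply le_antisymm
  · refine Finset.sup_le fun i hi => ?_
    simp only [Finset.mem_filter, Finset.mem_Icc] at hi
    obtain ⟨⟨-, hi⟩, hval, hstart⟩ := hi
    have hik : i ≤ B.length + (k + 1) := by
      by_contra! h
      exact hafter i (Finset.mem_Ioc.2 ⟨h, hi⟩) hval
    by_contra! h : B.length + 1 < i
    rcases hstart with rfl | hprev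
    · omega
    · exact hprev (hblock (i - 1) (by omega) (by omega))
  · refine Finset.le_sup (f := id) (Finset.mem_filter.2 ⟨?_, hblock _ (by omega) (by omega), ?_⟩)
    · rw [Finset.mem_Icc, List.length_append, List.length_append, List.length_replicate]
      omega
    · obtain rfl | ⟨C, y, rfl⟩ := List.eq_nil_or_concat' B
      · exact .inl rfl
      · exact .inr (by simpa [get1] using hB)

theorem ins_i0_append_replicate_append (hw : IsAreaSeq (B ++ List.replicate (k + 1) m ++ R)) :
    ins (B ++ List.replicate (k + 1) m ++ R) (i0 (B ++ List.replicate (k + 1) m ++ R) - 1) =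
      B ++ List.replicate (k + 1) m ++ m :: R := by
  have hle : ∀ y ∈ B, y ≤ m := fun y hy => (le_maxVal (by simp [hy])).trans_eq hm
  have hshift : m :: List.replicate (k + 1) m = List.replicate (k + 1) m ++ [m] := by
    rw [← List.replicate_succ, List.replicate_succ']
  have hfront : B ++ List.replicate (k + 1) m ++ R = B ++ m :: (List.replicate k m ++ R) := by
    simp [List.replicate_succ]
  rw [i0_append_replicate_append hB hm hR, Nat.add_sub_cancel, hfront,
    IsAreaSeq.ins_append_cons_length (hfront ▸ hw) hle hB, ← List.cons_append,
    ← List.replicate_succ, ← List.cons_append, hshift]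
  simp

end LastBlock

/-! ### Admissible insertions -/

/-- `w'` arises from `w` by inserting a letter `x` that becomes the last maximal letter of `w'` and
forms exactly `a` dinv pairs: with the copies of `x` before it and the letters `x - 1` after it.
The latter are counted as `y + 1 = x`, since truncated subtraction would be wrong at `x = 0`. -/
def IsLastMaxInsertion (a : ℕ) (w w' : List ℕ) : Prop :=
  ∃ L x R, w = L ++ R ∧ w' = L ++ x :: R ∧ (∀ y ∈ L, y ≤ x) ∧ (∀ y ∈ R, y < x) ∧
    L.count x + R.countP (· + 1 = x) = a

theorem IsLastMaxInsertion.dinv_eq {a : ℕ} {w w' : List ℕ} (h : IsLastMaxInsertion a w w') :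
    dinv w' = dinv w + a := by
  obtain ⟨L, x, R, rfl, rfl, hL, hR, rfl⟩ := h
  exact dinv_append_cons_of_le_of_lt hL hR

theorem IsLastMaxInsertion.length_admissible {a : ℕ} {w w' : List ℕ}
    (h : IsLastMaxInsertion a w w') :
    (admissible w').length = a + 2 := by
  obtain ⟨L, x, R, rfl, rfl, hL, hR, rfl⟩ := h
  exact length_admissible_append_cons hL hR

theorem isLastMaxInsertion_ins_of_mem_Maxb {w : List ℕ} {c : ℕ} (hc : c ∈ Maxb w) :
    IsLastMaxInsertion ((Maxb w).filter (c < ·)).card w (ins w c) := by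
  have hle : ∀ y ∈ w, y < maxVal w + 1 := fun y hy => Nat.lt_succ_of_le (le_maxVal hy)
  have hL : ∀ y ∈ w.take c, y < maxVal w + 1 := fun y hy => hle y (List.mem_of_mem_take hy)
  simp only [Maxb, Finset.mem_filter, Finset.mem_Icc] at hc
  refine ⟨w.take c, maxVal w + 1, w.drop c, (w.take_append_drop c).symm, ?_,
    fun y hy => (hL y hy).le, fun y hy => hle y (List.mem_of_mem_drop hy), ?_⟩
  · rw [ins, if_neg (by omega), hc.2]
  · rw [card_filter_lt_Maxb, List.count_eq_zero.2 fun h => (hL _ h).false, zero_add]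
    simp [List.count, beq_eq_decide]

theorem isLastMaxInsertion_ins_of_mem_Maxa {w : List ℕ} {c : ℕ} (hc : c ∈ Maxa w) :
    IsLastMaxInsertion ((Maxb w).card + ((Maxa w).filter (c < ·)).card) w (ins w c) := by
  simp only [Maxa, Finset.mem_filter, Finset.mem_Icc] at hc
  obtain ⟨hc, hval, hafter⟩ := hc
  have hR : ∀ y ∈ w.drop c, y < maxVal w := forall_mem_drop_iff.2 hafter
  refine ⟨w.take c, maxVal w, w.drop c, (w.take_append_drop c).symm, ?_,
    fun y hy => le_maxVal (List.mem_of_mem_take hy), hR, ?_⟩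
  · rw [ins, if_neg (by omega), hval]
  · have hcount : w.count (maxVal w) = (w.take c).count (maxVal w) := by
      have hzero : (w.drop c).count (maxVal w) = 0 :=
        List.count_eq_zero.2 fun h => (hR _ h).false
      rw [← add_zero ((w.take c).count _), ← hzero, ← List.count_append, w.take_append_drop]
    rw [card_Maxb, hcount, card_filter_lt_Maxa hR]

theorem isLastMaxInsertion_ins_i0 {w : List ℕ} (hw : IsAreaSeq w) (hne : w ≠ []) :
    IsLastMaxInsertion ((Maxb w).card + (Maxa w).card) w (ins w (i0 w - 1)) := by
  obtain ⟨B, k, R, hsplit, hR, hB⟩ := exists_eq_append_replicate_append (maxVal_mem hne)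
  have hle : ∀ y ∈ w, y ≤ maxVal w := fun y => le_maxVal
  generalize hm : maxVal w = m at hsplit hR hB hle
  have hRlt : ∀ y ∈ R, y < m := fun y hy =>
    (hle y (by simp [hsplit, hy])).lt_of_ne fun hym => hR (hym ▸ hy)
  have hMaxb : (Maxb w).card = (B ++ List.replicate (k + 1) m).count m := by
    rw [card_Maxb, hm, hsplit, List.count_append, List.count_eq_zero.2 hR, add_zero]
  have hMaxa : (Maxa w).card = R.countP (· + 1 = m) := by
    have hback : w = (B ++ List.replicate k m) ++ m :: R := by simp [hsplit, List.replicate_succ']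
    rw [hback] at hle ⊢
    exact card_Maxa_append_cons (fun y hy => hle y (List.mem_append_left _ hy)) hRlt
  rw [hMaxb, hMaxa]
  subst hsplit
  exact ⟨B ++ List.replicate (k + 1) m, m, R, rfl, ins_i0_append_replicate_append hB hm hR hw,
    fun y hy => hle y (List.mem_append_left R hy), hRlt, rfl⟩

theorem isLastMaxInsertion_ins_admissible {w : List ℕ} (hw : IsAreaSeq w) {a : ℕ}
    (ha : a < (admissible w).length) :
    IsLastMaxInsertion a w (ins w ((admissible w).getD a 0)) := by
  rw [List.getD_eq_getElem _ _ ha]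
  obtain rfl | hne := eq_or_ne w []
  · have ha : a = 0 := by simpa [admissible] using ha
    exact ⟨[], 0, [], by simp [ha, ins, admissible]⟩
  simp only [admissible, if_neg hne, List.append_assoc] at ha ⊢
  obtain hb | hb := lt_or_ge a ((Maxb w).sort (· ≤ ·)).reverse.length
  · have h := isLastMaxInsertion_ins_of_mem_Maxb
      (Finset.mem_sort _ |>.1 (List.mem_reverse.1 (List.getElem_mem hb)))
    rwa [card_filter_sort_reverse_getElem_lt, ← List.getElem_append_left hb] at h
  obtain ⟨t, rfl⟩ := Nat.exists_eq_add_of_le hb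
  have hcard : ((Maxb w).sort (· ≤ ·)).reverse.length = (Maxb w).card := by simp
  rw [List.getElem_append_right hb]
  simp only [hcard, Nat.add_sub_cancel_left]
  obtain ht | ht := lt_or_ge t ((Maxa w).sort (· ≤ ·)).reverse.length
  · have h := isLastMaxInsertion_ins_of_mem_Maxa
      (Finset.mem_sort _ |>.1 (List.mem_reverse.1 (List.getElem_mem ht)))
    rwa [card_filter_sort_reverse_getElem_lt, ← List.getElem_append_left ht] at h
  · have ht : t = (Maxa w).card := by
      simp only [List.length_append, List.length_reverse, Finset.length_sort,
        List.length_singleton] at ha ht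
      omega
    simpa [ht] using isLastMaxInsertion_ins_i0 hw hne

/-! ### The map `ψ` -/

theorem psi_append_singleton (u : List ℕ) (a : ℕ) :
    psi (u ++ [a]) = ins (psi u) ((admissible (psi u)).getD a 0) := by
  simp [psi, psiRev]

theorem isAreaSeq_psi (w : List ℕ) : IsAreaSeq (psi w) := by
  induction w using List.reverseRecOn with
  | nil => simp [psi, psiRev, IsAreaSeq]
  | append_singleton u a ih =>
    exact psi_append_singleton u a ▸ isAreaSeq_ins ih (admissible_getD_le_length _ a)

theorem isLastMaxInsertion_psi_append_singleton {u : List ℕ} {a : ℕ}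
    (ha : a < (admissible (psi u)).length) :
    IsLastMaxInsertion a (psi u) (psi (u ++ [a])) :=
  psi_append_singleton u a ▸ isLastMaxInsertion_ins_admissible (isAreaSeq_psi u) ha

theorem IsAreaSeq.lt_length_admissible_psi {u : List ℕ} {a : ℕ} (h : IsAreaSeq (u ++ [a])) :
    a < (admissible (psi u)).length := by
  induction u using List.reverseRecOn generalizing a with
  | nil =>
    have ha : a = 0 := by simpa [get1] using h.1
    simp [ha, psi, psiRev, admissible]
  | append_singleton u b ih =>
    rw [(isLastMaxInsertion_psi_append_singleton (ih h.of_append)).length_admissible]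
    rw [List.append_assoc] at h
    exact Nat.lt_succ_of_le h.le_add_one

/-- For every area sequence `w`, `dinv (ψ w) = area w`. -/
theorem dinv_psi_eq_area (w : List ℕ) (hw : IsAreaSeq w) :
    dinv (psi w) = area w := by
  induction w using List.reverseRecOn with
  | nil => rfl
  | append_singleton u a ih =>
    calc dinv (psi (u ++ [a]))
      _ = dinv (psi u) + a :=
        (isLastMaxInsertion_psi_append_singleton hw.lt_length_admissible_psi).dinv_eq
      _ = area u + a := by rw [ih hw.of_append]
      _ = area (u ++ [a]) := by simp [area]
end

section
/- For all natural numbers n, q, and t, the number of area sequences of size n with dinv equal to q and area equal to t is equal to the number of area sequences of size n with area equal to q and bounce equal to t. -/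
/-!
A letter `m` can be inserted into a word so as to become its rightmost maximum; this raises the area
by `m`, and `dinv` by the number of letters `m` to its left plus the number of letters `m - 1` to
its right. Building a word from the empty one by such insertions and recording the successive gains
of `dinv` gives a code `u` with `area u` equal to the `dinv` of the result. The result determines
its code, since the last inserted letter is always the rightmost maximum.

Stay inside area sequences, and let the last gain be `a` and the maximum `m` occur `c` times. Then
the next gain can be any `a' ≤ a + 1`: if `a' < c` the maximum rises to `m + 1`, otherwise another
`m` is added. These are the rules for area sequences and their bounce sequences, a rise of the
maximum being a bounce of `u`. So every area sequence is a code, and summing the inserted maxima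
gives `bounce u`. This injects the finite set of area sequences of size `n` into itself.
-/

variable {u v A z : List ℕ} {a m : ℕ}

/-! ### Appending a letter -/

theorem get1_concat_of_le {i : ℕ} (h₁ : 1 ≤ i) (h : i ≤ u.length) :
    get1 (u ++ [a]) i = get1 u i :=
  List.getD_append _ _ _ _ (by omega)

theorem get1_concat_length : get1 (u ++ [a]) (u.length + 1) = a := by
  simp [get1]

theorem card_filter_get1_eq_countP (p : ℕ → Prop) [DecidablePred p] (w : List ℕ) :
    {i ∈ Finset.Icc 1 w.length | p (get1 w i)}.card = w.countP (p ·) := by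
  induction w using List.reverseRecOn with
  | nil => simp
  | append_singleton w a ih =>
    have hw : {i ∈ Finset.Icc 1 w.length | p (get1 (w ++ [a]) i)} =
        {i ∈ Finset.Icc 1 w.length | p (get1 w i)} :=
      Finset.filter_congr fun i hi => by
        rw [get1_concat_of_le (Finset.mem_Icc.1 hi).1 (Finset.mem_Icc.1 hi).2]
    rw [List.length_append, List.length_singleton,
      ← Finset.insert_Icc_right_eq_Icc_add_one (by omega), Finset.filter_insert,
      get1_concat_length, hw, List.countP_append, List.countP_singleton, ← ih]
    split_ifs <;> simp_all

theorem dinv_concat (w : List ℕ) (a : ℕ) :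
    dinv (w ++ [a]) = dinv w + w.countP fun b => a = b ∨ a + 1 = b := by
  have hrow : ∀ i ∈ Finset.Icc 1 w.length,
      {j ∈ Finset.Ioc i (w.length + 1) | get1 (w ++ [a]) j = get1 (w ++ [a]) i ∨
        get1 (w ++ [a]) j + 1 = get1 (w ++ [a]) i}.card =
      {j ∈ Finset.Ioc i w.length | get1 w j = get1 w i ∨ get1 w j + 1 = get1 w i}.card +
        if a = get1 w i ∨ a + 1 = get1 w i then 1 else 0 := by
    intro i hi
    obtain ⟨hi₁, hi₂⟩ := Finset.mem_Icc.1 hi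
    have hw : {j ∈ Finset.Ioc i w.length | get1 (w ++ [a]) j = get1 w i ∨
          get1 (w ++ [a]) j + 1 = get1 w i} =
        {j ∈ Finset.Ioc i w.length | get1 w j = get1 w i ∨ get1 w j + 1 = get1 w i} :=
      Finset.filter_congr fun j hj => by
        have := Finset.mem_Ioc.1 hj
        rw [get1_concat_of_le (by omega) this.2]
    rw [← Finset.insert_Ioc_right_eq_Ioc_add_one hi₂, Finset.filter_insert,
      get1_concat_length, get1_concat_of_le hi₁ hi₂, hw]
    split_ifs <;> simp
  rw [dinv, List.length_append, List.length_singleton, Finset.sum_Icc_succ_top (by omega),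
    Finset.sum_congr rfl hrow, Finset.sum_add_distrib, ← Finset.card_filter,
    card_filter_get1_eq_countP fun b => a = b ∨ a + 1 = b]
  simp [dinv]

theorem isAreaSeq_iff_isChain (w : List ℕ) :
    IsAreaSeq w ↔ w.headD 0 = 0 ∧ w.IsChain fun a b => b ≤ a + 1 := by
  rw [IsAreaSeq, List.isChain_iff_getElem]
  refine and_congr (by cases w <;> simp [get1]) ⟨fun h i hi => ?_, fun h i h₁ hi => ?_⟩
  · have := h (i + 1) (by omega) hi
    simpa only [get1, Nat.add_sub_cancel, List.getD_eq_getElem _ _ hi,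
      List.getD_eq_getElem _ _ (Nat.lt_of_succ_lt hi)] using this
  · obtain ⟨k, rfl⟩ := Nat.exists_eq_add_of_le' h₁
    simpa only [get1, Nat.add_sub_cancel, List.getD_eq_getElem _ _ hi,
      List.getD_eq_getElem _ _ (Nat.lt_of_succ_lt hi)] using h k hi

theorem isAreaSeq_singleton : IsAreaSeq [a] ↔ a = 0 := by
  simp [isAreaSeq_iff_isChain]

theorem IsAreaSeq.of_concat (h : IsAreaSeq (u ++ [a])) : IsAreaSeq u ∧ a ≤ u.getLastD 0 + 1 := by
  rw [isAreaSeq_iff_isChain] at h ⊢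
  rcases List.eq_nil_or_concat' u with rfl | ⟨u, b, rfl⟩
  · simp_all
  · have hhead : (u ++ [b] ++ [a]).headD 0 = (u ++ [b]).headD 0 := by cases u <;> rfl
    have hchain := List.isChain_append.1 h.2
    exact ⟨⟨hhead ▸ h.1, hchain.1⟩, by simpa using hchain.2.2⟩

theorem IsAreaSeq.insert {B y : List ℕ} {j : ℕ} (h : IsAreaSeq (B ++ j :: y))
    (hj : m ≤ j + 1) (hy : ∀ b ∈ y, b ≤ m) : IsAreaSeq (B ++ j :: m :: y) := by
  have hhead : (B ++ j :: m :: y).headD 0 = (B ++ j :: y).headD 0 := by cases B <;> rfl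
  rw [isAreaSeq_iff_isChain, List.isChain_split, List.isChain_cons] at h
  rw [isAreaSeq_iff_isChain, List.isChain_append_cons_cons, List.isChain_cons, hhead]
  exact ⟨h.1, h.2.1, hj, fun b hb => (hy b (List.mem_of_mem_head? hb)).trans m.le_succ, h.2.2.2⟩

/-- The area sequences of size `n`. -/
def areaSeqs (n : ℕ) : Set (List ℕ) := {w | IsAreaSeq w ∧ w.length = n}

theorem areaSeqs_finite (n : ℕ) : (areaSeqs n).Finite := by
  induction n with
  | zero => exact (Set.finite_singleton []).subset fun w hw => List.length_eq_zero_iff.1 hw.2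
  | succ n ih =>
    refine (ih.biUnion fun u _ => (Set.finite_Iic (u.getLastD 0 + 1)).image (u ++ [·])).subset ?_
    rintro w ⟨hw, hlen⟩
    rcases List.eq_nil_or_concat' w with rfl | ⟨u, a, rfl⟩
    · simp at hlen
    · obtain ⟨hu, ha⟩ := hw.of_concat
      exact Set.mem_biUnion (show u ∈ areaSeqs n from ⟨hu, by simpa using hlen⟩) ⟨a, ha, rfl⟩

theorem bseq_concat_of_le (u : List ℕ) (a : ℕ) :
    ∀ i ≤ u.length, bseq (u ++ [a]) i = bseq u i
  | 0, _ => rfl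
  | 1, _ => rfl
  | i + 2, h => by
    rw [bseq, bseq, bseq_concat_of_le u a (i + 1) (by omega), get1_concat_of_le (by omega) h]

theorem bseq_concat_length (hu : u ≠ []) :
    bseq (u ++ [a]) (u.length + 1) =
      if bseq u u.length + 1 ≤ a then bseq u u.length + 1 else 0 := by
  obtain ⟨k, hk⟩ := Nat.exists_eq_add_of_le' (List.length_pos_iff.2 hu)
  have hlast : get1 (u ++ [a]) (k + 2) = a := by simpa only [hk] using get1_concat_length (u := u)
  rw [hk, bseq, hlast, bseq_concat_of_le u a _ hk.ge]

theorem bounces_concat (hu : u ≠ []) :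
    bounces (u ++ [a]) = if bseq u u.length + 1 ≤ a then bounces u
      else insert (u.length + 1) (bounces u) := by
  have hle : {i ∈ Finset.Icc 2 u.length | bseq (u ++ [a]) i = 0} = bounces u :=
    Finset.filter_congr fun i hi => by rw [bseq_concat_of_le _ _ _ (Finset.mem_Icc.1 hi).2]
  have hpos : 1 ≤ u.length := List.length_pos_iff.2 hu
  rw [bounces, List.length_append, List.length_singleton,
    ← Finset.insert_Icc_right_eq_Icc_add_one (by omega), Finset.filter_insert,
    bseq_concat_length hu, hle]
  split_ifs <;> simp_all

theorem le_length_of_mem_bounces {i : ℕ} (h : i ∈ bounces u) : i ≤ u.length :=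
  (Finset.mem_Icc.1 (Finset.mem_filter.1 h).1).2

theorem length_succ_notMem_bounces (u : List ℕ) : u.length + 1 ∉ bounces u :=
  fun h => (le_length_of_mem_bounces h).not_gt u.length.lt_succ_self

theorem card_bounces_concat (hu : u ≠ []) :
    (bounces (u ++ [a])).card =
      if bseq u u.length + 1 ≤ a then (bounces u).card else (bounces u).card + 1 := by
  rw [bounces_concat hu, apply_ite Finset.card,
    Finset.card_insert_of_notMem (length_succ_notMem_bounces u)]

-- Appending a letter moves every bounce one place further from the end, and a bounce at the
-- new letter itself has weight 1.
theorem bounce_concat (hu : u ≠ []) :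
    bounce (u ++ [a]) = bounce u + (bounces (u ++ [a])).card := by
  have hshift : ∑ i ∈ bounces u, (u.length + 1 - i + 1) = bounce u + (bounces u).card := by
    rw [bounce, Finset.card_eq_sum_ones, ← Finset.sum_add_distrib]
    refine Finset.sum_congr rfl fun i hi => ?_
    have := le_length_of_mem_bounces hi
    omega
  rw [card_bounces_concat hu, bounce, bounces_concat hu, List.length_append,
    List.length_singleton]
  split_ifs
  · exact hshift
  · rw [Finset.sum_insert (length_succ_notMem_bounces u), hshift]
    omega

/-! ### Inserting a rightmost maximum -/

/-- The displayed letter `m` of the word `A ++ m :: z` is its rightmost maximum. -/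
structure IsRightmostMax (A : List ℕ) (m : ℕ) (z : List ℕ) : Prop where
  le_of_mem_left : ∀ b ∈ A, b ≤ m
  lt_of_mem_right : ∀ b ∈ z, b < m

/-- The increase of `dinv` when the rightmost maximum `m` is inserted between `A` and `z`.
All letters of `z` are then smaller than `m`, so that `m ≤ b + 1` selects the letters `m - 1`. -/
def dinvGain (A : List ℕ) (m : ℕ) (z : List ℕ) : ℕ :=
  A.count m + z.countP (m ≤ · + 1)

theorem isRightmostMax_singleton (m : ℕ) : IsRightmostMax [] m [] :=
  ⟨by simp, by simp⟩

namespace IsRightmostMax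

theorem notMem_right (h : IsRightmostMax A m z) : m ∉ z :=
  fun hm => (h.lt_of_mem_right m hm).false

theorem le_of_mem (h : IsRightmostMax A m z) {b : ℕ} (hb : b ∈ A ++ m :: z) : b ≤ m := by
  rcases List.mem_append.1 hb with hA | hz
  · exact h.le_of_mem_left b hA
  · rcases List.mem_cons.1 hz with rfl | hz
    · exact le_rfl
    · exact (h.lt_of_mem_right b hz).le

theorem unique {B y : List ℕ} {k : ℕ} (h : IsRightmostMax A m z)
    (h' : IsRightmostMax B k y) (e : A ++ m :: z = B ++ k :: y) : A = B ∧ m = k ∧ z = y := by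
  obtain rfl : m = k := le_antisymm (h'.le_of_mem (by simp [← e])) (h.le_of_mem (by simp [e]))
  have hz := h.notMem_right
  have hy := h'.notMem_right
  rcases List.append_eq_append_iff.1 e with ⟨c, hc⟩ | ⟨c, hc⟩ <;>
    cases c <;> simp_all

theorem dinv_insert (h : IsRightmostMax A m z) :
    dinv (A ++ m :: z) = dinv (A ++ z) + dinvGain A m z := by
  induction z using List.reverseRecOn with
  | nil =>
    have hcount : A.countP (fun b => m = b ∨ m + 1 = b) = A.count m :=
      List.countP_congr fun b hb => by
        have := h.le_of_mem_left b hb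
        rw [decide_eq_true_iff, beq_iff_eq]
        omega
    rw [dinv_concat, hcount, List.append_nil, dinvGain, List.countP_nil, add_zero]
  | append_singleton z b ih =>
    have hb : b < m := h.lt_of_mem_right b (by simp)
    have hz : IsRightmostMax A m z :=
      ⟨h.le_of_mem_left, fun c hc => h.lt_of_mem_right c (List.mem_append_left _ hc)⟩
    have hpairs : (A ++ m :: z).countP (fun c => b = c ∨ b + 1 = c) =
        (A ++ z).countP (fun c => b = c ∨ b + 1 = c) + if m ≤ b + 1 then 1 else 0 := by
      have hm : (b = m ∨ b + 1 = m) ↔ m ≤ b + 1 := by omega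
      simp only [List.countP_append, List.countP_cons, decide_eq_true_iff, hm, Nat.add_assoc]
    have hgain : dinvGain A m (z ++ [b]) = dinvGain A m z + if m ≤ b + 1 then 1 else 0 := by
      simp only [dinvGain, List.countP_append, List.countP_singleton, decide_eq_true_iff,
        Nat.add_assoc]
    calc dinv (A ++ m :: (z ++ [b]))
      _ = dinv (A ++ m :: z ++ [b]) := by rw [List.append_assoc, List.cons_append]
      _ = dinv (A ++ z ++ [b]) + dinvGain A m (z ++ [b]) := by
        rw [dinv_concat, dinv_concat, ih hz, hpairs, hgain]
        omega
      _ = dinv (A ++ (z ++ [b])) + dinvGain A m (z ++ [b]) := by rw [List.append_assoc]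

end IsRightmostMax

/-- `InsertionCode u v` says that `v` is built from the empty word by successively inserting
rightmost maxima, the letters of `u` being the successive gains of `dinv`. -/
inductive InsertionCode : List ℕ → List ℕ → Prop
  | nil : InsertionCode [] []
  | concat {u A z : List ℕ} {m : ℕ} (code : InsertionCode u (A ++ z))
      (isMax : IsRightmostMax A m z) : InsertionCode (u ++ [dinvGain A m z]) (A ++ m :: z)

namespace InsertionCode

theorem length_eq (h : InsertionCode u v) : v.length = u.length := by
  induction h with
  | nil => rfl
  | concat _ _ ih => simp [← ih, Nat.add_assoc]

theorem dinv_eq_area (h : InsertionCode u v) : dinv v = area u := by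
  induction h with
  | nil => rfl
  | concat _ hmax ih => simp [hmax.dinv_insert, ih, area]

theorem leftUnique : Relator.LeftUnique InsertionCode := by
  intro u₁ u₂ v h₁ h₂
  induction h₁ generalizing u₂ with
  | nil =>
    generalize hv : [] = v at h₂
    cases h₂ <;> simp_all
  | @concat u A z m _ hmax ih =>
    generalize hv : A ++ m :: z = v at h₂
    cases h₂ with
    | nil => simp at hv
    | concat code' hmax' =>
      obtain ⟨rfl, rfl, rfl⟩ := hmax.unique hmax' hv
      rw [ih code']

end InsertionCode

/-! ### The possible gains -/

theorem exists_append_cons_countP_eq {α : Type*} (p : α → Bool) {l : List α} :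
    a < l.countP p → ∃ l₁ b l₂, l = l₁ ++ b :: l₂ ∧ p b ∧ l₂.countP p = a := by
  induction l with
  | nil => simp
  | cons b l ih =>
    intro h
    by_cases hl : a < l.countP p
    · obtain ⟨l₁, c, l₂, rfl, hc, hl₂⟩ := ih hl
      exact ⟨b :: l₁, c, l₂, rfl, hc, hl₂⟩
    · have hb : p b := by
        by_contra hb
        exact hl (List.countP_cons_of_neg hb ▸ h)
      rw [List.countP_cons_of_pos hb] at h
      exact ⟨[], b, l, rfl, hb, by omega⟩

theorem IsAreaSeq.exists_insert {s : List ℕ} (h : IsAreaSeq (A ++ s)) (hs : ∀ b ∈ s, b ≤ m)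
    (ha : a < s.countP (m ≤ · + 1)) :
    ∃ B y, B ++ y = A ++ s ∧ y <:+ s.tail ∧ y.countP (m ≤ · + 1) = a ∧
      IsAreaSeq (B ++ m :: y) := by
  obtain ⟨s₁, j, y, rfl, hj, hy⟩ := exists_append_cons_countP_eq _ ha
  refine ⟨A ++ s₁ ++ [j], y, by simp, ?_, hy, ?_⟩
  · cases s₁ with
    | nil => exact List.suffix_rfl
    | cons c s₁ => exact ⟨s₁ ++ [j], by simp⟩
  · rw [← List.append_assoc] at h
    have hinsert := h.insert (of_decide_eq_true hj) fun b hb => hs b (by simp [hb])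
    simpa only [List.append_assoc, List.singleton_append] using hinsert

namespace IsRightmostMax

theorem exists_insert_max (h : IsRightmostMax A m z) (hv : IsAreaSeq (A ++ m :: z))
    (ha : A.count m + 1 ≤ a) (ha' : a ≤ dinvGain A m z + 1) :
    ∃ B y, B ++ y = A ++ m :: z ∧ IsRightmostMax B m y ∧ IsAreaSeq (B ++ m :: y) ∧
      dinvGain B m y = a ∧ B.count m = A.count m + 1 := by
  obtain ⟨k, rfl⟩ := Nat.exists_eq_add_of_le ha
  have hk : k < (m :: z).countP (m ≤ · + 1) := by
    rw [List.countP_cons_of_pos (by simp)]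
    unfold dinvGain at ha'
    omega
  obtain ⟨B, y, hBy, hyz, hcount, hw⟩ :=
    hv.exists_insert (fun b hb => h.le_of_mem (List.mem_append_right A hb)) hk
  have hmax : IsRightmostMax B m y :=
    ⟨fun b hb => h.le_of_mem (by rw [← hBy]; exact List.mem_append_left y hb),
      fun b hb => h.lt_of_mem_right b (hyz.subset hb)⟩
  have hB : B.count m = A.count m + 1 := by
    simpa [List.count_eq_zero_of_not_mem h.notMem_right,
      List.count_eq_zero_of_not_mem hmax.notMem_right] using congrArg (List.count m) hBy
  exact ⟨B, y, hBy, hmax, hw, by rw [dinvGain, hB, hcount], hB⟩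

theorem exists_insert_max_succ (h : IsRightmostMax A m z) (hv : IsAreaSeq (A ++ m :: z))
    (ha : a ≤ A.count m) :
    ∃ B y, B ++ y = A ++ m :: z ∧ IsRightmostMax B (m + 1) y ∧ IsAreaSeq (B ++ (m + 1) :: y) ∧
      dinvGain B (m + 1) y = a ∧ B.count (m + 1) = 0 := by
  have hlt : ∀ b ∈ A ++ m :: z, b < m + 1 := fun b hb => Nat.lt_succ_of_le (h.le_of_mem hb)
  have ha' : a < (A ++ m :: z).countP (m + 1 ≤ · + 1) :=
    calc a
      _ < (A ++ m :: z).count m := by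
        simp only [List.count_append, List.count_cons_self]
        omega
      _ ≤ (A ++ m :: z).countP (m + 1 ≤ · + 1) := List.countP_mono_left (by simp +contextual)
  obtain ⟨B, y, hBy, -, hcount, hw⟩ :=
    IsAreaSeq.exists_insert (A := []) (s := A ++ m :: z) hv (fun b hb => (hlt b hb).le) ha'
  rw [List.nil_append] at hBy
  have hB : ∀ b ∈ B, b < m + 1 := fun b hb => hlt b (hBy ▸ List.mem_append_left y hb)
  have hB' : B.count (m + 1) = 0 := List.count_eq_zero_of_not_mem fun hm => (hB _ hm).false
  exact ⟨B, y, hBy,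
    ⟨fun b hb => (hB b hb).le, fun b hb => hlt b (hBy ▸ List.mem_append_right B hb)⟩,
    hw, by rw [dinvGain, hB', hcount, zero_add], hB'⟩

end IsRightmostMax

/-! ### The bijection -/

/-- The state reached by the word `A ++ m :: z` built from the nonempty code `u` when its last
inserted letter is the displayed `m`: the bounces of `u` count the increases of the maximum, and
the bounce sequence counts the earlier copies of the current maximum. -/
structure InsertionState (u A : List ℕ) (m : ℕ) (z : List ℕ) : Prop where
  code : InsertionCode u (A ++ m :: z)
  isMax : IsRightmostMax A m z
  isAreaSeq : IsAreaSeq (A ++ m :: z)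
  card_bounces : (bounces u).card = m
  bseq_length : bseq u u.length = A.count m
  getLastD_eq : u.getLastD 0 = dinvGain A m z
  area_eq : area (A ++ m :: z) = bounce u

namespace InsertionState

theorem singleton_zero : InsertionState [0] [] 0 [] where
  code := .concat .nil (isRightmostMax_singleton 0)
  isMax := isRightmostMax_singleton 0
  isAreaSeq := isAreaSeq_singleton.2 rfl
  card_bounces := rfl
  bseq_length := rfl
  getLastD_eq := rfl
  area_eq := rfl

theorem ne_nil (h : InsertionState u A m z) : u ≠ [] := by
  rintro rfl
  simpa using h.code.length_eq

theorem concat {B y : List ℕ} {k : ℕ} (h : InsertionState u A m z)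
    (hBy : B ++ y = A ++ m :: z) (hmax : IsRightmostMax B k y) (hw : IsAreaSeq (B ++ k :: y))
    (hk : k = (bounces (u ++ [dinvGain B k y])).card)
    (hB : B.count k = bseq (u ++ [dinvGain B k y]) (u.length + 1)) :
    InsertionState (u ++ [dinvGain B k y]) B k y where
  code := .concat (hBy ▸ h.code) hmax
  isMax := hmax
  isAreaSeq := hw
  card_bounces := hk.symm
  bseq_length := by rw [List.length_append, List.length_singleton, hB]
  getLastD_eq := by simp
  area_eq := by
    have harea : area (B ++ k :: y) = area (B ++ y) + k := by
      simp only [area, List.sum_append, List.sum_cons]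
      omega
    rw [harea, hBy, h.area_eq, bounce_concat h.ne_nil, ← hk]

theorem exists_concat (h : InsertionState u A m z) (ha : a ≤ u.getLastD 0 + 1) :
    ∃ B k y, InsertionState (u ++ [a]) B k y := by
  have hcard := card_bounces_concat h.ne_nil (a := a)
  have hbseq := bseq_concat_length h.ne_nil (a := a)
  rw [h.bseq_length, h.card_bounces] at hcard
  rw [h.bseq_length] at hbseq
  by_cases hc : A.count m + 1 ≤ a
  · rw [if_pos hc] at hcard hbseq
    obtain ⟨B, y, hBy, hmax, hw, rfl, hB⟩ :=
      h.isMax.exists_insert_max h.isAreaSeq hc (h.getLastD_eq ▸ ha)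
    exact ⟨B, m, y, h.concat hBy hmax hw hcard.symm (hB.trans hbseq.symm)⟩
  · rw [if_neg hc] at hcard hbseq
    obtain ⟨B, y, hBy, hmax, hw, rfl, hB⟩ :=
      h.isMax.exists_insert_max_succ h.isAreaSeq (Nat.lt_succ_iff.1 (not_le.1 hc))
    exact ⟨B, m + 1, y, h.concat hBy hmax hw hcard.symm (hB.trans hbseq.symm)⟩

end InsertionState

theorem IsAreaSeq.exists_insertionState (h : IsAreaSeq u) (hu : u ≠ []) :
    ∃ A m z, InsertionState u A m z := by
  induction u using List.reverseRecOn with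
  | nil => exact absurd rfl hu
  | append_singleton u a ih =>
    obtain ⟨hinit, hlast⟩ := h.of_concat
    by_cases hnil : u = []
    · subst hnil
      obtain rfl := isAreaSeq_singleton.1 h
      exact ⟨[], 0, [], .singleton_zero⟩
    · obtain ⟨A, m, z, hstate⟩ := ih hinit hnil
      exact hstate.exists_concat hlast

theorem IsAreaSeq.exists_insertionCode (h : IsAreaSeq u) :
    ∃ v, InsertionCode u v ∧ IsAreaSeq v ∧ area v = bounce u := by
  by_cases hu : u = []
  · subst hu
    exact ⟨[], .nil, h, rfl⟩
  · obtain ⟨A, m, z, hstate⟩ := h.exists_insertionState hu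
    exact ⟨_, hstate.code, hstate.isAreaSeq, hstate.area_eq⟩

theorem exists_bijOn_areaSeqs (n : ℕ) :
    ∃ f : List ℕ → List ℕ, Set.BijOn f (areaSeqs n) (areaSeqs n) ∧
      ∀ u ∈ areaSeqs n, dinv (f u) = area u ∧ area (f u) = bounce u := by
  choose! f hcode hf harea using fun u => IsAreaSeq.exists_insertionCode (u := u)
  refine ⟨f, ?_, fun u hu => ⟨(hcode u hu.1).dinv_eq_area, harea u hu.1⟩⟩
  have hmaps : Set.MapsTo f (areaSeqs n) (areaSeqs n) :=
    fun u hu => ⟨hf u hu.1, (hcode u hu.1).length_eq.trans hu.2⟩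
  have hinj : Set.InjOn f (areaSeqs n) := fun u hu v hv huv =>
    InsertionCode.leftUnique (hcode u hu.1) (huv ▸ hcode v hv.1)
  exact ((areaSeqs_finite n).injOn_iff_bijOn_of_mapsTo hmaps).1 hinj

/-- The number of area sequences of size `n` with dinv `q` and area `t` equals
the number of area sequences of size `n` with area `q` and bounce `t`. -/
theorem card_dinv_area_eq_card_area_bounce (n q t : ℕ) :
    Nat.card {w : List ℕ // IsAreaSeq w ∧ w.length = n ∧ dinv w = q ∧ area w = t} =
      Nat.card {w : List ℕ // IsAreaSeq w ∧ w.length = n ∧ area w = q ∧ bounce w = t} := by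
  obtain ⟨f, hf, hstat⟩ := exists_bijOn_areaSeqs n
  have hsub : {w | IsAreaSeq w ∧ w.length = n ∧ dinv w = q ∧ area w = t} ⊆ areaSeqs n :=
    fun w hw => ⟨hw.1, hw.2.1⟩
  have hpre : areaSeqs n ∩ f ⁻¹' {w | IsAreaSeq w ∧ w.length = n ∧ dinv w = q ∧ area w = t} =
      {w | IsAreaSeq w ∧ w.length = n ∧ area w = q ∧ bounce w = t} := by
    ext w
    constructor
    · rintro ⟨hw, -, -, hq, ht⟩
      exact ⟨hw.1, hw.2, (hstat w hw).1 ▸ hq, (hstat w hw).2 ▸ ht⟩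
    · rintro ⟨hw, hlen, rfl, rfl⟩
      exact ⟨⟨hw, hlen⟩, (hf.mapsTo ⟨hw, hlen⟩).1, (hf.mapsTo ⟨hw, hlen⟩).2, hstat w ⟨hw, hlen⟩⟩
  exact (hpre ▸ hf.subset_right hsub).ncard_eq.symm
end
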